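/- Let G be a simple graph on Fin N admitting a completely degenerate equilibrium of the identical Kuramoto system. Then G is bipartite (i.e., G is 2-colorable: there is a function c : Fin N → Fin 2 such that adjacent vertices receive distinct colors). -/

import Mathlib

open Real

open Classical in
/-- Adjacency indicator: `1` if `j` and `k` are adjacent in `G`, `0` otherwise. -/
noncomputable def adjInd {V : Type*} (G : SimpleGraph V) (j k : V) : ℝ :=
  if G.Adj j k then 1 else 0

/-- A completely degenerate equilibrium of the identical Kuramoto system on `G`. -/
def IsCDE {V : Type*} [Fintype V] (G : SimpleGraph V) (θ : V → ℝ) : Prop :=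
  (∀ k, ∑ j, adjInd G j k * Real.sin (θ j - θ k) = 0) ∧
  (∀ j k, G.Adj j k → Real.cos (θ j - θ k) = 0)

/-- if `G` admits a completely degenerate equilibrium, then `G` is bipartite,
i.e. 2-colorable. -/
theorem stmt2 {N : ℕ} (G : SimpleGraph (Fin N))
    (h : ∃ θ : Fin N → ℝ, IsCDE G θ) :
    ∃ c : Fin N → Fin 2, ∀ j k : Fin N, G.Adj j k → c j ≠ c k := by
  classical
  obtain ⟨θ, -, h⟩ := h
  refine ⟨fun j => if 0 < Real.cos (2 * θ j) ∨
    (Real.cos (2 * θ j) = 0 ∧ 0 < Real.sin (2 * θ j)) then 1 else 0, ?_⟩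
  intro j k hjk
  have hd := h j k hjk
  have e : 2 * θ j = 2 * (θ j - θ k) + 2 * θ k := by ring
  have hc : Real.cos (2 * θ j) = - Real.cos (2 * θ k) := by
    rw [e, Real.cos_add, Real.cos_two_mul (θ j - θ k), Real.sin_two_mul (θ j - θ k), hd]; ring
  have hs : Real.sin (2 * θ j) = - Real.sin (2 * θ k) := by
    rw [e, Real.sin_add, Real.cos_two_mul (θ j - θ k), Real.sin_two_mul (θ j - θ k), hd]; ring
  have h1 := Real.sin_sq_add_cos_sq (2 * θ k)
  simp only [hc, hs]
  generalize Real.cos (2 * θ k) = x at *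
  generalize Real.sin (2 * θ k) = y at *
  rcases lt_trichotomy x 0 with hx | hx | hx
  · simp [hx, hx.ne, hx.not_gt]
  · subst hx
    rcases lt_trichotomy y 0 with hy | hy | hy
    · simp [hy, hy.not_gt]
    · subst hy; norm_num at h1
    · simp [hy, hy.not_gt]
  · simp [hx, hx.ne', hx.not_gt]
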